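/- (Putinar-type Positivstellensatz for bounded spectrahedra.) Let L be a linear pencil with bounded spectrahedron S_L. If f ∈ ℝ[X₁,…,Xₙ] satisfies f(x) > 0 for all x ∈ S_L, then f ∈ M_L. -/

import Mathlib

open MvPolynomial Matrix

/-- The linear pencil `L = A 0 + X 1 * A 1 + ... + X n * A n` as a symmetric matrix
with entries in the polynomial ring `ℝ[X 1, ..., X n]`. -/
noncomputable def pencilPoly {n m : ℕ} (A : Fin (n+1) → Matrix (Fin m) (Fin m) ℝ) :
    Matrix (Fin m) (Fin m) (MvPolynomial (Fin n) ℝ) :=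
  fun a b => MvPolynomial.C (A 0 a b) + ∑ i : Fin n, MvPolynomial.X i * MvPolynomial.C (A i.succ a b)

/-- Evaluation of the pencil at a point `x ∈ ℝⁿ`. -/
def pencilEval {n m : ℕ} (A : Fin (n+1) → Matrix (Fin m) (Fin m) ℝ) (x : Fin n → ℝ) :
    Matrix (Fin m) (Fin m) ℝ :=
  A 0 + ∑ i : Fin n, x i • A i.succ

/-- The spectrahedron `S_L = {x ∈ ℝⁿ ∣ L(x) ⪰ 0}`. -/
def specSet {n m : ℕ} (A : Fin (n+1) → Matrix (Fin m) (Fin m) ℝ) : Set (Fin n → ℝ) :=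
  {x | (pencilEval A x).PosSemidef}

/-- `vᵀ L v` for a vector `v` of polynomials. -/
noncomputable def vLv {n m : ℕ} (A : Fin (n+1) → Matrix (Fin m) (Fin m) ℝ)
    (v : Fin m → MvPolynomial (Fin n) ℝ) : MvPolynomial (Fin n) ℝ :=
  ∑ a : Fin m, ∑ b : Fin m, v a * pencilPoly A a b * v b

/-- Membership in the quadratic module `M_L` associated to the pencil `L`:
`p = s + Σⱼ vⱼᵀ L vⱼ` with `s` a sum of squares. -/
def memQM {n m : ℕ} (A : Fin (n+1) → Matrix (Fin m) (Fin m) ℝ)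
    (p : MvPolynomial (Fin n) ℝ) : Prop :=
  ∃ (k r : ℕ) (q : Fin k → MvPolynomial (Fin n) ℝ)
    (v : Fin r → Fin m → MvPolynomial (Fin n) ℝ),
    p = ∑ i, (q i)^2 + ∑ j, vLv A (v j)

/-!
A maximal proper quadratic module `Q ⊇ M_L` yields a point of `S_L`: on the finite-dimensional space
of affine polynomials there is a functional that vanishes on `Q ∩ -Q`, is positive at `1` and
nonnegative on all `uᵀ L u`, because `-uᵀ L u ∈ Q` forces `uᵀ L v ∈ Q ∩ -Q` for every `v`. Hence
`M_L` is everything if `S_L` is empty. If `S_L` is nonempty and bounded, a nonnegative functional on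
affine polynomials that kills `1` is a recession direction of `S_L`, hence zero, so by duality every
affine polynomial is bounded by a constant modulo `M_L`. Thus `M_L` is archimedean. For an
archimedean quadratic module, the quotient by the support of a maximal proper quadratic module is
`ℝ`, so the theorem follows as in the proof of Putinar's Positivstellensatz.
-/

/-! ### Quadratic modules -/

/-- A quadratic module of `R`, without the axiom `1 ∈ M`: a subset closed under addition and under
multiplication by sums of squares. Lemmas that need `1 ∈ M` assume it. Encoding quadratic modules as
submodules over the semiring of sums of squares makes their order theory (joins, maximal proper
ones) that of `Submodule`. -/
abbrev SumSqSubmodule (R : Type*) [CommRing R] := Submodule (Subsemiring.sumSq R) R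

namespace SumSqSubmodule

section CommRing

variable {R : Type*} [CommRing R] {M Q : SumSqSubmodule R}

theorem sumSq_mul_mem {s a : R} (hs : IsSumSq s) (ha : a ∈ M) : s * a ∈ M :=
  M.smul_mem ⟨s, Subsemiring.mem_sumSq.2 hs⟩ ha

theorem sq_mul_mem (h : R) {a : R} (ha : a ∈ M) : h ^ 2 * a ∈ M :=
  sumSq_mul_mem (IsSquare.sq h).isSumSq ha

theorem sumSq_mem (h1 : 1 ∈ M) {s : R} (hs : IsSumSq s) : s ∈ M := by
  simpa using sumSq_mul_mem hs h1

theorem sq_mem (h1 : 1 ∈ M) (h : R) : h ^ 2 ∈ M :=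
  sumSq_mem h1 (IsSquare.sq h).isSumSq

theorem mem_sup_span_singleton {a p : R} :
    p ∈ M ⊔ Submodule.span (Subsemiring.sumSq R) {a} ↔
      ∃ q ∈ M, ∃ s, IsSumSq s ∧ q + s * a = p := by
  simp [Submodule.mem_sup, Submodule.mem_span_singleton, Subsemiring.smul_def]

theorem exists_add_sumSq_mul_eq_neg_one_of_isCoatom (hQ : IsCoatom Q) {a : R} (ha : a ∉ Q) :
    ∃ q ∈ Q, ∃ s, IsSumSq s ∧ q + s * a = -1 := by
  have htop : Q ⊔ Submodule.span (Subsemiring.sumSq R) {a} = ⊤ := hQ.2 _ (by simpa using ha)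
  exact mem_sup_span_singleton.1 (htop ▸ Submodule.mem_top)

variable [Invertible (2 : R)]

theorem sq_sub_sq_invOf_two_mul (a : R) : (⅟2 * (a + 1)) ^ 2 - (⅟2 * (a - 1)) ^ 2 = a := by
  linear_combination (2 * ⅟2 + 1) * a * invOf_mul_self (2 : R)

theorem eq_top_of_neg_one_mem (h1 : 1 ∈ M) (h : -1 ∈ M) : M = ⊤ := by
  refine eq_top_iff.2 fun a _ => ?_
  rw [← sq_sub_sq_invOf_two_mul a, sub_eq_add_neg, ← mul_neg_one]
  exact M.add_mem (sq_mem h1 _) (sq_mul_mem _ h)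

theorem exists_isCoatom_le (hM : M ≠ ⊤) : ∃ Q : SumSqSubmodule R, IsCoatom Q ∧ M ≤ Q := by
  have : Module.Finite (Subsemiring.sumSq R) R := by
    refine ⟨Submodule.fg_def.2 ⟨{1, -1}, by simp, ?_⟩⟩
    exact eq_top_of_neg_one_mem (Submodule.subset_span (by simp)) (Submodule.subset_span (by simp))
  exact (eq_top_or_exists_le_coatom M).resolve_left hM

/-- The support `M ∩ -M` of a quadratic module `M`, an ideal because `2` is invertible. -/
def supportIdeal (M : SumSqSubmodule R) : Ideal R where
  carrier := {a | a ∈ M ∧ -a ∈ M}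
  zero_mem' := by simp
  add_mem' ha hb := ⟨M.add_mem ha.1 hb.1, by rw [neg_add]; exact M.add_mem ha.2 hb.2⟩
  smul_mem' b a ha := by
    rw [smul_eq_mul, ← sq_sub_sq_invOf_two_mul b]
    constructor
    · convert M.add_mem (sq_mul_mem (⅟2 * (b + 1)) ha.1) (sq_mul_mem (⅟2 * (b - 1)) ha.2) using 1
      ring
    · convert M.add_mem (sq_mul_mem (⅟2 * (b + 1)) ha.2) (sq_mul_mem (⅟2 * (b - 1)) ha.1) using 1
      ring

theorem mem_supportIdeal {a : R} : a ∈ M.supportIdeal ↔ a ∈ M ∧ -a ∈ M := Iff.rfl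

theorem neg_one_notMem_of_isCoatom (h1 : 1 ∈ Q) (hQ : IsCoatom Q) : -1 ∉ Q :=
  fun h => hQ.1 (eq_top_of_neg_one_mem h1 h)

theorem supportIdeal_ne_top_of_isCoatom (h1 : 1 ∈ Q) (hQ : IsCoatom Q) : Q.supportIdeal ≠ ⊤ :=
  fun h => neg_one_notMem_of_isCoatom h1 hQ ((Ideal.eq_top_iff_one Q.supportIdeal).1 h).2

theorem mem_or_neg_mem_of_isCoatom (h1 : 1 ∈ Q) (hQ : IsCoatom Q) (a : R) : a ∈ Q ∨ -a ∈ Q := by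
  by_contra! h
  obtain ⟨q, hq, s, hs, hqs⟩ := exists_add_sumSq_mul_eq_neg_one_of_isCoatom hQ h.1
  obtain ⟨q', hq', s', hs', hqs'⟩ := exists_add_sumSq_mul_eq_neg_one_of_isCoatom hQ h.2
  have hneg : -s ∈ Q := by
    convert Q.add_mem (sumSq_mem h1 hs')
      (Q.add_mem (sumSq_mul_mem hs' hq) (sumSq_mul_mem hs hq')) using 1
    linear_combination -s' * hqs - s * hqs'
  have hsa : a * s ∈ Q.supportIdeal := Ideal.mul_mem_left _ a ⟨sumSq_mem h1 hs, hneg⟩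
  refine neg_one_notMem_of_isCoatom h1 hQ ?_
  rw [← hqs, mul_comm s a]
  exact Q.add_mem hq hsa.1

theorem exists_add_mul_eq_neg_one_of_isCoatom (hQ : IsCoatom Q) {a : R}
    (ha : a ∉ Q.supportIdeal) : ∃ q ∈ Q, ∃ g, q + g * a = -1 := by
  let J : SumSqSubmodule R := (Ideal.span {a}).restrictScalars (Subsemiring.sumSq R)
  have haJ : a ∈ J := Ideal.mem_span_singleton_self a
  have hlt : Q < Q ⊔ J :=
    left_lt_sup.2 fun hJ => ha ⟨hJ haJ, hJ (neg_mem haJ : -a ∈ Ideal.span {a})⟩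
  obtain ⟨q, hq, j, hj, hqj⟩ := Submodule.mem_sup.1
    ((hQ.2 _ hlt).ge (Submodule.mem_top : (-1 : R) ∈ ⊤))
  obtain ⟨g, rfl⟩ := Ideal.mem_span_singleton'.1 hj
  exact ⟨q, hq, g, hqj⟩

-- If `-1 = q + g * a` with `q ∈ Q`, then `p = (b + 1) ^ 2 * g` gives `b - (b + 1) ^ 2 ∈ Q`, a
-- polynomial in `b` without real roots and with negative leading coefficient.
theorem mem_supportIdeal_of_forall_add_mul_mem (h1 : 1 ∈ Q) (hQ : IsCoatom Q) {a b : R}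
    (h : ∀ p, b + p * a ∈ Q) : a ∈ Q.supportIdeal := by
  by_contra ha
  obtain ⟨q, hq, g, hqg⟩ := exists_add_mul_eq_neg_one_of_isCoatom hQ ha
  have hneg : b - (b + 1) ^ 2 ∈ Q := by
    convert Q.add_mem (h ((b + 1) ^ 2 * g)) (sq_mul_mem (b + 1) hq) using 1
    linear_combination -(b + 1) ^ 2 * hqg
  refine neg_one_notMem_of_isCoatom h1 hQ ?_
  convert Q.add_mem (Q.add_mem (sq_mul_mem 2 hneg) (sq_mem h1 (2 * b + 1))) (Q.add_mem h1 h1)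
    using 1
  ring

end CommRing

section Real

variable {R : Type*} [CommRing R] [Algebra ℝ R] {M Q : SumSqSubmodule R}

/-- Makes the results on rings with invertible `2` available in real algebras. -/
noncomputable scoped instance invertibleTwo : Invertible (2 : R) :=
  (Invertible.map (algebraMap ℝ R) 2).copy 2 (map_ofNat _ 2).symm

theorem isSumSq_algebraMap {c : ℝ} (hc : 0 ≤ c) : IsSumSq (algebraMap ℝ R c) :=
  ((Real.isSquare_iff.2 hc).map (algebraMap ℝ R)).isSumSq

theorem algebraMap_mul_mem {c : ℝ} (hc : 0 ≤ c) {a : R} (ha : a ∈ M) : algebraMap ℝ R c * a ∈ M :=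
  sumSq_mul_mem (isSumSq_algebraMap hc) ha

theorem algebraMap_mem (h1 : 1 ∈ M) {c : ℝ} (hc : 0 ≤ c) : algebraMap ℝ R c ∈ M :=
  sumSq_mem h1 (isSumSq_algebraMap hc)

/-- A quadratic module over a real algebra as a convex cone. -/
def toPointedCone (M : SumSqSubmodule R) : PointedCone ℝ R where
  __ := M.toAddSubmonoid
  smul_mem' c a ha := by
    change (c : ℝ) • a ∈ M
    rw [Algebra.smul_def]
    exact algebraMap_mul_mem c.2 ha

theorem algebraMap_sub_mem_of_le (h1 : 1 ∈ M) {a : R} {N N' : ℝ} (hN : N ≤ N')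
    (ha : algebraMap ℝ R N - a ∈ M) : algebraMap ℝ R N' - a ∈ M := by
  convert M.add_mem ha (algebraMap_mem h1 (sub_nonneg.2 hN)) using 1
  rw [map_sub]; ring

/-- An archimedean quadratic module: every element of the algebra is bounded above by a real
constant. -/
structure IsArchimedean (M : SumSqSubmodule R) : Prop where
  one_mem : 1 ∈ M
  exists_sub_mem : ∀ a, ∃ N : ℝ, algebraMap ℝ R N - a ∈ M

theorem IsArchimedean.mono (hM : M.IsArchimedean) (h : M ≤ Q) : Q.IsArchimedean :=
  ⟨h hM.one_mem, fun a => (hM.exists_sub_mem a).imp fun _ hN => h hN⟩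

theorem IsArchimedean.eventually_sub_mem (hM : M.IsArchimedean) (a : R) :
    ∀ᶠ N : ℝ in Filter.atTop, algebraMap ℝ R N - a ∈ M := by
  obtain ⟨N, hN⟩ := hM.exists_sub_mem a
  filter_upwards [Filter.eventually_ge_atTop N] with N' hN'
  exact algebraMap_sub_mem_of_le hM.one_mem hN' hN

theorem sq_sub_sq_mem {a : R} {N : ℝ} (hN : 0 < N) (h : algebraMap ℝ R N - a ∈ M)
    (h' : algebraMap ℝ R N + a ∈ M) : algebraMap ℝ R (N ^ 2) - a ^ 2 ∈ M := by
  convert algebraMap_mul_mem (c := 1 / (2 * N)) (by positivity)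
    (M.add_mem (sq_mul_mem (algebraMap ℝ R N + a) h) (sq_mul_mem (algebraMap ℝ R N - a) h')) using 1
  have hinv : algebraMap ℝ R (1 / (2 * N)) * (2 * algebraMap ℝ R N) = 1 := by
    rw [← map_ofNat (algebraMap ℝ R) 2, ← map_mul, ← map_mul, one_div_mul_cancel (by positivity),
      map_one]
  rw [map_pow]
  linear_combination (-(algebraMap ℝ R N ^ 2 - a ^ 2)) * hinv

/-- The subalgebra of elements whose square is bounded by a real constant modulo `M`. -/
def boundedSubalgebra (M : SumSqSubmodule R) (h1 : 1 ∈ M) : Subalgebra ℝ R where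
  carrier := {a | ∃ N : ℝ, 0 ≤ N ∧ algebraMap ℝ R N - a ^ 2 ∈ M}
  algebraMap_mem' r := ⟨r ^ 2, sq_nonneg r, by simp⟩
  add_mem' := by
    rintro a b ⟨N, hN, ha⟩ ⟨N', hN', hb⟩
    refine ⟨(N + N') + (N + N'), by positivity, ?_⟩
    convert M.add_mem (M.add_mem (M.add_mem ha hb) (M.add_mem ha hb)) (sq_mem h1 (a - b)) using 1
    simp only [map_add]
    ring
  mul_mem' := by
    rintro a b ⟨N, hN, ha⟩ ⟨N', hN', hb⟩
    refine ⟨N * N', by positivity, ?_⟩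
    convert M.add_mem (algebraMap_mul_mem hN hb) (sq_mul_mem b ha) using 1
    rw [map_mul]
    ring

theorem isArchimedean_of_adjoin_eq_top (h1 : 1 ∈ M) {S : Set R} (hS : Algebra.adjoin ℝ S = ⊤)
    (hM : ∀ a ∈ S, (∃ N : ℝ, algebraMap ℝ R N - a ∈ M) ∧ ∃ N : ℝ, algebraMap ℝ R N - -a ∈ M) :
    M.IsArchimedean := by
  have htop : M.boundedSubalgebra h1 = ⊤ := by
    rw [eq_top_iff, ← hS, Algebra.adjoin_le_iff]
    intro a ha
    obtain ⟨⟨N, hN⟩, N', hN'⟩ := hM a ha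
    let K := max 1 (max N N')
    refine ⟨K ^ 2, sq_nonneg K, sq_sub_sq_mem (by positivity) ?_ ?_⟩
    · exact algebraMap_sub_mem_of_le h1 (by simp [K]) hN
    · rw [← sub_neg_eq_add]
      exact algebraMap_sub_mem_of_le h1 (by simp [K]) hN'
  refine ⟨h1, fun a => ?_⟩
  obtain ⟨N, -, hN⟩ : a ∈ M.boundedSubalgebra h1 := htop ▸ Algebra.mem_top
  -- `N + 1 - 2 * a = (N - a ^ 2) + (a - 1) ^ 2`
  refine ⟨1 / 2 * (N + 1), ?_⟩
  have h2 : algebraMap ℝ R (1 / 2) * 2 = 1 := by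
    rw [← map_ofNat (algebraMap ℝ R) 2, ← map_mul, one_div_mul_cancel two_ne_zero, map_one]
  convert algebraMap_mul_mem (c := 1 / 2) (by norm_num) (M.add_mem hN (sq_mem h1 (a - 1))) using 1
  rw [map_mul, map_add, map_one]
  linear_combination a * h2

theorem nonneg_of_algebraMap_mem (h1 : 1 ∈ M) (hM' : M ≠ ⊤) {c : ℝ}
    (hc : algebraMap ℝ R c ∈ M) : 0 ≤ c := by
  by_contra! hneg
  refine hM' (eq_top_of_neg_one_mem h1 ?_)
  convert algebraMap_mul_mem (c := (-c)⁻¹) (by simpa using hneg.le) hc using 1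
  rw [← map_mul, inv_neg, neg_mul, inv_mul_cancel₀ hneg.ne, map_neg, map_one]

/-- The closure of an archimedean quadratic module `M`: the elements that lie in `M` after adding
any positive constant. -/
def IsArchimedean.closure (hM : M.IsArchimedean) : SumSqSubmodule R where
  carrier := {a | ∀ ε : ℝ, 0 < ε → a + algebraMap ℝ R ε ∈ M}
  zero_mem' ε hε := by simpa using algebraMap_mem hM.one_mem hε.le
  add_mem' {a b} ha hb ε hε := by
    convert M.add_mem (ha _ (half_pos hε)) (hb _ (half_pos hε)) using 1
    rw [add_add_add_comm, ← map_add, add_halves]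
  smul_mem' := by
    rintro ⟨s, hs⟩ a ha ε hε
    obtain ⟨N, hN, hN0⟩ :=
      ((hM.eventually_sub_mem s).and (Filter.eventually_gt_atTop 0)).exists
    convert M.add_mem (sumSq_mul_mem (Subsemiring.mem_sumSq.1 hs) (ha (ε / N) (by positivity)))
      (algebraMap_mul_mem (c := ε / N) (by positivity) hN) using 1
    have hεN : algebraMap ℝ R (ε / N) * algebraMap ℝ R N = algebraMap ℝ R ε := by
      rw [← map_mul, div_mul_cancel₀ _ hN0.ne']
    rw [Subsemiring.smul_def, smul_eq_mul]
    linear_combination -hεN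

theorem IsArchimedean.closure_eq_of_isCoatom (hQ : Q.IsArchimedean) (hQ' : IsCoatom Q) :
    hQ.closure = Q := by
  have hle : Q ≤ hQ.closure := fun a ha ε hε => Q.add_mem ha (algebraMap_mem hQ.one_mem hε.le)
  refine (hQ'.le_iff.1 hle).resolve_left fun htop => ?_
  have hmem : algebraMap ℝ R (-1) ∈ hQ.closure := htop ▸ Submodule.mem_top
  have := nonneg_of_algebraMap_mem hQ.one_mem hQ'.1 (c := -1 + 1 / 2)
    (by rw [map_add]; exact hmem _ (by norm_num))
  norm_num at this

theorem IsArchimedean.exists_sub_algebraMap_mem_supportIdeal (hQ : Q.IsArchimedean)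
    (hQ' : IsCoatom Q) (a : R) : ∃ r : ℝ, a - algebraMap ℝ R r ∈ Q.supportIdeal := by
  let S : Set ℝ := {r | a - algebraMap ℝ R r ∈ Q}
  obtain ⟨N, hN⟩ := hQ.exists_sub_mem a
  obtain ⟨N', hN'⟩ := hQ.exists_sub_mem (-a)
  have hbdd : BddAbove S := by
    refine ⟨N, fun r hr => sub_nonneg.1 (nonneg_of_algebraMap_mem hQ.one_mem hQ'.1 ?_)⟩
    convert Q.add_mem hN hr using 1
    rw [map_sub]; ring
  have hne : S.Nonempty := ⟨-N', by simpa [S, add_comm] using hN'⟩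
  refine ⟨sSup S, ?_⟩
  rw [mem_supportIdeal, ← hQ.closure_eq_of_isCoatom hQ']
  refine ⟨fun ε hε => ?_, fun ε hε => ?_⟩
  · obtain ⟨r, hr, hlt⟩ := exists_lt_of_lt_csSup hne (sub_lt_self (sSup S) hε)
    convert Q.add_mem hr (algebraMap_mem hQ.one_mem (c := r - (sSup S - ε)) (by linarith)) using 1
    simp only [map_sub]; ring
  · have hnot : a - algebraMap ℝ R (sSup S + ε) ∉ Q :=
      fun h => (lt_add_of_pos_right _ hε).not_ge (le_csSup hbdd h)
    convert (mem_or_neg_mem_of_isCoatom hQ.one_mem hQ' _).resolve_left hnot using 1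
    rw [map_add]; ring

theorem IsArchimedean.exists_algHom_nonneg (hM : M.IsArchimedean) (hM' : M ≠ ⊤) :
    ∃ φ : R →ₐ[ℝ] ℝ, ∀ a ∈ M, 0 ≤ φ a := by
  obtain ⟨Q, hQ', hMQ⟩ := exists_isCoatom_le hM'
  have hQ := hM.mono hMQ
  have : Nontrivial (R ⧸ Q.supportIdeal) :=
    Ideal.Quotient.nontrivial_iff.2 (supportIdeal_ne_top_of_isCoatom hQ.one_mem hQ')
  have hbij : Function.Bijective (Algebra.ofId ℝ (R ⧸ Q.supportIdeal)) := by
    refine ⟨(algebraMap ℝ _).injective, fun b => ?_⟩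
    obtain ⟨a, rfl⟩ := Ideal.Quotient.mk_surjective b
    obtain ⟨r, hr⟩ := hQ.exists_sub_algebraMap_mem_supportIdeal hQ' a
    exact ⟨r, (Ideal.Quotient.eq.2 hr).symm⟩
  let φ : R →ₐ[ℝ] ℝ :=
    (AlgEquiv.ofBijective _ hbij).symm.toAlgHom.comp (Ideal.Quotient.mkₐ ℝ Q.supportIdeal)
  refine ⟨φ, fun a ha => nonneg_of_algebraMap_mem hQ.one_mem hQ'.1 ?_⟩
  have hφ : algebraMap ℝ R (φ a) - a ∈ Q.supportIdeal :=
    Ideal.Quotient.eq.1 ((AlgEquiv.ofBijective _ hbij).apply_symm_apply (Ideal.Quotient.mk _ a))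
  simpa using Q.add_mem hφ.1 (hMQ ha)

-- For `q = s * f - 1` and a large constant `k`, the identity behind the proof is
-- `k² (f + r) - 1 = (k - s)² (f + r) + 2 k q + r s (2 k - s) + (2 k - (s² f + 1))`.
theorem IsArchimedean.exists_pos_forall_add_sub_mem (hM : M.IsArchimedean) {s f : R}
    (hs : IsSumSq s) (hsf : s * f - 1 ∈ M) :
    ∃ δ : ℝ, 0 < δ ∧ ∀ r : ℝ, 0 ≤ r → f + algebraMap ℝ R r ∈ M →
      f + algebraMap ℝ R (r - δ) ∈ M := by
  obtain ⟨k, ⟨hks, hkf⟩, hk⟩ := ((Filter.tendsto_id.const_mul_atTop zero_lt_two).eventually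
    ((hM.eventually_sub_mem s).and (hM.eventually_sub_mem (s ^ 2 * f + 1)))).and
      (Filter.eventually_gt_atTop 0) |>.exists
  refine ⟨(1 / k) ^ 2, by positivity, fun r hr hfr => ?_⟩
  have hk2 : algebraMap ℝ R (1 / k) * algebraMap ℝ R k = 1 := by
    rw [← map_mul, one_div_mul_cancel hk.ne', map_one]
  rw [id_eq, map_mul, map_ofNat] at hks hkf
  have hsum := M.add_mem (M.add_mem (sq_mul_mem (algebraMap ℝ R k - s) hfr)
      (algebraMap_mul_mem (mul_nonneg zero_le_two hk.le) hsf))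
    (M.add_mem (algebraMap_mul_mem hr (sumSq_mul_mem hs hks)) hkf)
  convert sq_mul_mem (algebraMap ℝ R (1 / k)) hsum using 1
  simp only [map_sub, map_mul, map_pow, map_ofNat]
  linear_combination (-(f + algebraMap ℝ R r) * (algebraMap ℝ R (1 / k) * algebraMap ℝ R k + 1)) *
    hk2

theorem IsArchimedean.mem_of_sumSq_mul_sub_one_mem (hM : M.IsArchimedean) {s f : R}
    (hs : IsSumSq s) (hsf : s * f - 1 ∈ M) : f ∈ M := by
  obtain ⟨δ, hδ, hstep⟩ := hM.exists_pos_forall_add_sub_mem hs hsf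
  obtain ⟨N, hN⟩ := hM.exists_sub_mem (-f)
  have hdesc (k : ℕ) : f + algebraMap ℝ R (max 0 (N - k * δ)) ∈ M := by
    induction k with
    | zero =>
      convert algebraMap_sub_mem_of_le hM.one_mem (le_max_right 0 N) hN using 1
      simp [add_comm]
    | succ k ih =>
      have hle : max 0 (N - k * δ) - δ ≤ max 0 (N - (k + 1 : ℕ) * δ) := by
        push_cast
        grind
      convert M.add_mem (hstep _ (le_max_left _ _) ih)
        (algebraMap_mem hM.one_mem (sub_nonneg.2 hle)) using 1
      simp only [map_sub]
      ring
  obtain ⟨k, hk⟩ := Archimedean.arch N hδ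
  rw [nsmul_eq_mul] at hk
  simpa [max_eq_left (sub_nonpos.2 hk)] using hdesc k

theorem IsArchimedean.mem_of_forall_algHom_pos (hM : M.IsArchimedean) {f : R}
    (hf : ∀ φ : R →ₐ[ℝ] ℝ, (∀ a ∈ M, 0 ≤ φ a) → 0 < φ f) : f ∈ M := by
  have htop : M ⊔ Submodule.span (Subsemiring.sumSq R) {-f} = ⊤ := by
    by_contra hne
    obtain ⟨φ, hφ⟩ := (hM.mono le_sup_left).exists_algHom_nonneg hne
    have hφf := hφ (-f) (Submodule.mem_sup_right (Submodule.mem_span_singleton_self _))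
    have := hf φ fun a ha => hφ a (Submodule.mem_sup_left ha)
    rw [map_neg] at hφf
    linarith
  obtain ⟨q, hq, s, hs, hqs⟩ := mem_sup_span_singleton.1
    (htop.ge (Submodule.mem_top : (-1 : R) ∈ ⊤))
  refine hM.mem_of_sumSq_mul_sub_one_mem hs ?_
  convert hq using 1
  linear_combination -hqs

end Real

end SumSqSubmodule

/-! ### Convex cones in finite-dimensional spaces -/

section Convexity

theorem isCompact_convexHull_of_isCompact {E : Type*} [AddCommGroup E] [Module ℝ E]
    [TopologicalSpace E] [ContinuousAdd E] [ContinuousSMul ℝ E] [FiniteDimensional ℝ E] {s : Set E}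
    (hs : IsCompact s) : IsCompact (convexHull ℝ s) := by
  have hCaratheodory : convexHull ℝ s = ⋃ k ∈ Set.Iic (Module.finrank ℝ E + 1),
      (fun p : (Fin k → ℝ) × (Fin k → E) => ∑ i, p.1 i • p.2 i) ''
        (stdSimplex ℝ (Fin k) ×ˢ Set.univ.pi fun _ => s) := by
    apply Set.Subset.antisymm
    · intro x hx
      obtain ⟨ι, _, z, w, hz, hind, hw, hw1, rfl⟩ := eq_pos_convex_span_of_mem_convexHull hx
      have hcard : Fintype.card ι ≤ Module.finrank ℝ E + 1 := hind.card_le_finrank_succ.trans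
        (Nat.succ_le_succ (Submodule.finrank_le _))
      let e := (Fintype.equivFin ι).symm
      exact Set.mem_iUnion₂.2 ⟨Fintype.card ι, hcard, (w ∘ e, z ∘ e),
        ⟨⟨fun i => (hw _).le, (e.sum_comp w).trans hw1⟩, fun i _ => hz ⟨_, rfl⟩⟩,
        e.sum_comp fun i => w i • z i⟩
    · refine Set.iUnion₂_subset fun k _ => ?_
      rintro _ ⟨⟨w, z⟩, ⟨hw, hz⟩, rfl⟩
      exact (convex_convexHull ℝ s).sum_mem (fun i _ => hw.1 i) hw.2
        fun i _ => subset_convexHull ℝ s (hz i trivial)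
  rw [hCaratheodory]
  refine (Set.finite_Iic _).isCompact_biUnion fun k _ => ?_
  exact ((isCompact_stdSimplex ℝ (Fin k)).prod (isCompact_univ_pi fun _ => hs)).image (by fun_prop)

theorem convex_setOf_mem_and_neg_notMem {E : Type*} [AddCommGroup E] [Module ℝ E]
    (P : PointedCone ℝ E) : Convex ℝ {x | x ∈ P ∧ -x ∉ P} := by
  refine convex_iff_forall_pos.2 fun x hx y hy s t hs ht hst =>
    ⟨P.convex hx.1 hy.1 hs.le ht.le hst, fun hneg => hx.2 ?_⟩
  convert P.smul_mem (inv_nonneg.2 hs.le) (P.add_mem hneg (P.smul_mem ht.le hy.1)) using 1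
  rw [neg_add, neg_add_cancel_right, smul_neg, inv_smul_smul₀ hs.ne']

variable {E : Type*} [NormedAddCommGroup E] [NormedSpace ℝ E]

theorem eq_zero_of_isBounded_of_ray_subset {s : Set E} (hs : Bornology.IsBounded s) {x y : E}
    (hxy : ∀ t : ℝ, 0 ≤ t → x + t • y ∈ s) : y = 0 := by
  obtain ⟨C, hC⟩ := hs.exists_norm_le
  by_contra hy
  have hy' : 0 < ‖y‖ := norm_pos_iff.2 hy
  have hC0 : 0 ≤ C := (norm_nonneg _).trans (hC _ (hxy 0 le_rfl))
  let t := (C + ‖x‖ + 1) / ‖y‖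
  have ht : 0 ≤ t := by positivity
  have hnorm : ‖t • y‖ = C + ‖x‖ + 1 := by
    rw [norm_smul, Real.norm_of_nonneg ht, div_mul_cancel₀ _ hy'.ne']
  have hle : ‖t • y‖ ≤ ‖x + t • y‖ + ‖x‖ := by
    simpa using norm_sub_le (x + t • y) x
  linarith [hC _ (hxy t ht)]

variable [FiniteDimensional ℝ E]

theorem exists_dual_pos_of_isCompact {P : PointedCone ℝ E} {Z : Set E} (hZ : IsCompact Z)
    (hZP : ∀ z ∈ Z, z ∈ P ∧ -z ∉ P) :
    ∃ ψ : StrongDual ℝ E, (∀ x ∈ P.lineal, ψ x = 0) ∧ ∀ z ∈ Z, 0 < ψ z := by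
  let N : ProperCone ℝ E :=
    ⟨PointedCone.ofSubmodule P.lineal, P.lineal.closed_of_finiteDimensional⟩
  have hdisj : Disjoint (convexHull ℝ Z) N := Set.disjoint_left.2 fun x hx hxN =>
    (convexHull_min hZP (convex_setOf_mem_and_neg_notMem P) hx).2 (PointedCone.mem_lineal.1 hxN).2
  obtain ⟨ψ, hψN, hψZ⟩ := N.hyperplane_separation (convex_convexHull ℝ Z)
    (isCompact_convexHull_of_isCompact hZ) hdisj
  refine ⟨-ψ, fun x hx => ?_, fun z hz => neg_pos.2 (hψZ z (subset_convexHull ℝ Z hz))⟩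
  have hneg : 0 ≤ ψ (-x) := hψN (-x) (P.lineal.neg_mem hx)
  rw [map_neg] at hneg
  exact neg_eq_zero.2 (le_antisymm (neg_nonneg.1 hneg) (hψN x hx))

-- On a complement `W` of the radical of `B` modulo `P.lineal`, the unit sphere is mapped by
-- `w ↦ B w w` to a compact subset of `P` avoiding `-P`, so a functional can be made positive there.
theorem exists_dual_pos_of_bilin {V : Type*} [NormedAddCommGroup V] [NormedSpace ℝ V]
    [FiniteDimensional ℝ V] {P : PointedCone ℝ E} {e : E} (he : e ∈ P) (he' : -e ∉ P)
    {B : V →ₗ[ℝ] V →ₗ[ℝ] E} (hsymm : ∀ u v, B u v = B v u) (hB : ∀ u, B u u ∈ P)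
    (hker : ∀ u, -B u u ∈ P → ∀ v, B u v ∈ P.lineal) :
    ∃ ψ : StrongDual ℝ E, 0 < ψ e ∧ ∀ u, 0 ≤ ψ (B u u) := by
  let K := LinearMap.ker (B.compr₂ P.lineal.mkQ)
  have hK {u : V} : u ∈ K ↔ ∀ v, B u v ∈ P.lineal := by
    simp [K, LinearMap.ext_iff, Submodule.Quotient.mk_eq_zero]
  obtain ⟨W, hKW⟩ := K.exists_isCompl
  let S : Set V := W ∩ Metric.sphere 0 1
  have hS : IsCompact S := (isCompact_sphere 0 1).inter_left W.closed_of_finiteDimensional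
  have hcont : Continuous fun w => B w w :=
    B.toContinuousBilinearMap.continuous.clm_apply continuous_id
  obtain ⟨ψ, hψ0, hψ⟩ := exists_dual_pos_of_isCompact (P := P) ((hS.image hcont).insert e) <| by
    rintro _ (rfl | ⟨w, ⟨hwW, hw1⟩, rfl⟩)
    · exact ⟨he, he'⟩
    · refine ⟨hB w, fun hneg => ne_zero_of_mem_unit_sphere (⟨w, hw1⟩ : Metric.sphere (0 : V) 1) ?_⟩
      exact Submodule.disjoint_def.1 hKW.disjoint w (hK.2 (hker w hneg)) hwW
  have hψW {w : V} (hw : w ∈ W) : 0 ≤ ψ (B w w) := by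
    obtain rfl | hw0 := eq_or_ne w 0
    · simp
    have hwS : ‖w‖⁻¹ • w ∈ S := ⟨W.smul_mem _ hw, by simp [norm_smul, hw0]⟩
    have hpos := hψ _ (Set.mem_insert_of_mem e (Set.mem_image_of_mem _ hwS))
    simp only [map_smul, LinearMap.smul_apply, smul_eq_mul] at hpos
    exact (pos_of_mul_pos_right (pos_of_mul_pos_right hpos (by positivity)) (by positivity)).le
  refine ⟨ψ, hψ e (Set.mem_insert e _), fun u => ?_⟩
  obtain ⟨k, hk, w, hw, rfl⟩ :=
    Submodule.mem_sup.1 (hKW.sup_eq_top.ge (Submodule.mem_top : u ∈ ⊤))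
  have hk0 (v : V) : ψ (B k v) = 0 := hψ0 _ (hK.1 hk v)
  simpa [hsymm w k, hk0] using hψW hw

theorem eq_univ_of_convex_of_dense {s : Set E} (hs : Convex ℝ s) (hd : Dense s) : s = Set.univ := by
  have hspan : affineSpan ℝ s = ⊤ := by
    rw [← AffineSubspace.coe_eq_univ_iff, Set.eq_univ_iff_forall]
    exact fun x => closure_minimal (subset_affineSpan ℝ s)
      (affineSpan ℝ s).closed_of_finiteDimensional (hd x)
  have hne := hs.interior_nonempty_iff_affineSpan_eq_top.2 hspan
  rw [← Set.univ_subset_iff, ← interior_univ, ← hd.closure_eq,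
    hs.interior_closure_eq_interior_of_nonempty_interior hne]
  exact interior_subset

theorem pointedCone_eq_top_of_forall_dual_eq_zero {P : PointedCone ℝ E}
    (hP : ∀ ψ : StrongDual ℝ E, (∀ x ∈ P, 0 ≤ ψ x) → ψ = 0) : P = ⊤ := by
  refine SetLike.coe_injective (eq_univ_of_convex_of_dense P.convex fun x => ?_)
  by_contra hx
  obtain ⟨ψ, hψ, hψx⟩ := ProperCone.hyperplane_separation_point (Submodule.closure P) hx
  rw [hP ψ fun y hy => hψ y (subset_closure hy)] at hψx
  exact lt_irrefl _ hψx

end Convexity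

/-! ### Linear pencils -/

section Pencil

open SumSqSubmodule

variable {n m : ℕ}

/-- The affine polynomial `d 0 + ∑ i, d (i + 1) * X i` with coefficient vector `d`. -/
noncomputable def affinePoly (n : ℕ) : (Fin (n + 1) → ℝ) →ₗ[ℝ] MvPolynomial (Fin n) ℝ :=
  Fintype.linearCombination ℝ (Fin.cons 1 X)

theorem affinePoly_apply (d : Fin (n + 1) → ℝ) :
    affinePoly n d = C (d 0) + ∑ i : Fin n, X i * C (d i.succ) := by
  simp [affinePoly, Fintype.linearCombination_apply, Fin.sum_univ_succ, smul_eq_C_mul, mul_comm]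

theorem affinePoly_single_zero (c : ℝ) : affinePoly n (Pi.single 0 c) = C c := by
  simp [affinePoly_apply]

theorem affinePoly_single_succ (i : Fin n) : affinePoly n (Pi.single i.succ 1) = X i := by
  simp [affinePoly_apply, Pi.single_apply]

theorem eval_affinePoly (x : Fin n → ℝ) (d : Fin (n + 1) → ℝ) :
    eval x (affinePoly n d) = d 0 + ∑ i : Fin n, x i * d i.succ := by
  simp [affinePoly_apply]

theorem linearMap_apply_eq_add_sum (ψ : (Fin (n + 1) → ℝ) →ₗ[ℝ] ℝ) (d : Fin (n + 1) → ℝ) :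
    ψ d = ψ (Pi.single 0 1) * d 0 + ∑ i : Fin n, ψ (Pi.single i.succ 1) * d i.succ := by
  have hsingle (i : Fin (n + 1)) : ψ (Pi.single i (d i)) = ψ (Pi.single i 1) * d i := by
    rw [mul_comm, ← smul_eq_mul, ← map_smul, ← Pi.single_smul, smul_eq_mul, mul_one]
  conv_lhs => rw [← Finset.univ_sum_single d, map_sum, Fin.sum_univ_succ]
  simp only [hsingle]

theorem eval_div_affinePoly {ψ : (Fin (n + 1) → ℝ) →ₗ[ℝ] ℝ} (hψ : ψ (Pi.single 0 1) ≠ 0)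
    (d : Fin (n + 1) → ℝ) :
    eval (fun i => ψ (Pi.single i.succ 1) / ψ (Pi.single 0 1)) (affinePoly n d) =
      ψ d / ψ (Pi.single 0 1) := by
  rw [eval_affinePoly, linearMap_apply_eq_add_sum ψ d, add_div, mul_div_cancel_left₀ _ hψ,
    Finset.sum_div]
  simp only [div_mul_eq_mul_div]

theorem eval_add_smul_affinePoly {ψ : (Fin (n + 1) → ℝ) →ₗ[ℝ] ℝ} (hψ : ψ (Pi.single 0 1) = 0)
    (x : Fin n → ℝ) (t : ℝ) (d : Fin (n + 1) → ℝ) :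
    eval (x + t • fun i => ψ (Pi.single i.succ 1)) (affinePoly n d) =
      eval x (affinePoly n d) + t * ψ d := by
  simp only [eval_affinePoly, linearMap_apply_eq_add_sum ψ d, hψ, Pi.add_apply, Pi.smul_apply,
    smul_eq_mul, add_mul, Finset.sum_add_distrib, zero_mul, zero_add, Finset.mul_sum, mul_assoc,
    add_assoc]

theorem algHom_apply_eq_eval_comp_X (φ : MvPolynomial (Fin n) ℝ →ₐ[ℝ] ℝ)
    (p : MvPolynomial (Fin n) ℝ) : φ p = eval (φ ∘ X) p := by
  rw [← aeval_eq_eval, ← aeval_unique]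

/-- The bilinear form sending constant vectors `u` and `v` to the coefficients of the affine
polynomial `uᵀ L v`. -/
def pencilForm (A : Fin (n + 1) → Matrix (Fin m) (Fin m) ℝ) :
    (Fin m → ℝ) →ₗ[ℝ] (Fin m → ℝ) →ₗ[ℝ] (Fin (n + 1) → ℝ) :=
  LinearMap.mk₂ ℝ (fun u v i => u ⬝ᵥ (A i *ᵥ v))
    (fun _ _ _ => funext fun _ => add_dotProduct _ _ _)
    (fun _ _ _ => funext fun _ => smul_dotProduct _ _ _)
    (fun _ _ _ => funext fun _ => by simp [mulVec_add, dotProduct_add])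
    (fun _ _ _ => funext fun _ => by simp [mulVec_smul, dotProduct_smul])

variable (A : Fin (n + 1) → Matrix (Fin m) (Fin m) ℝ)

theorem pencilForm_apply (u v : Fin m → ℝ) (i : Fin (n + 1)) :
    pencilForm A u v i = u ⬝ᵥ (A i *ᵥ v) := rfl

theorem vLv_eq_dotProduct (v : Fin m → MvPolynomial (Fin n) ℝ) :
    vLv A v = v ⬝ᵥ (pencilPoly A *ᵥ v) := by
  simp [vLv, dotProduct, mulVec, Finset.mul_sum, mul_assoc]

theorem affinePoly_pencilForm (u v : Fin m → ℝ) :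
    affinePoly n (pencilForm A u v) =
      (fun a => C (u a)) ⬝ᵥ (pencilPoly A *ᵥ fun b => C (v b)) := by
  have hcoeff : pencilForm A u v = ∑ a, ∑ b, (u a * v b) • fun i => A i a b := by
    ext i
    simp only [pencilForm_apply, dotProduct, mulVec, Finset.mul_sum, Finset.sum_apply,
      Pi.smul_apply, smul_eq_mul]
    exact Finset.sum_congr rfl fun a _ => Finset.sum_congr rfl fun b _ => by ring
  have hentry (a b : Fin m) : affinePoly n (fun i => A i a b) = pencilPoly A a b :=
    affinePoly_apply _
  simp only [hcoeff, map_sum, map_smul, hentry, dotProduct, mulVec, Finset.mul_sum, smul_eq_C_mul,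
    map_mul]
  exact Finset.sum_congr rfl fun a _ => Finset.sum_congr rfl fun b _ => by ring

theorem eval_affinePoly_pencilForm (x : Fin n → ℝ) (u v : Fin m → ℝ) :
    eval x (affinePoly n (pencilForm A u v)) = u ⬝ᵥ (pencilEval A x *ᵥ v) := by
  simp [eval_affinePoly, pencilForm_apply, pencilEval, add_mulVec, sum_mulVec, dotProduct_add,
    dotProduct_sum, smul_mulVec]

variable {A}

theorem memQM.add {p p' : MvPolynomial (Fin n) ℝ} (hp : memQM A p) (hp' : memQM A p') :
    memQM A (p + p') := by
  obtain ⟨k, r, q, v, rfl⟩ := hp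
  obtain ⟨k', r', q', v', rfl⟩ := hp'
  refine ⟨k + k', r + r', Fin.append q q', Fin.append v v', ?_⟩
  simp only [Fin.sum_univ_add, Fin.append_left, Fin.append_right]
  ring

theorem memQM.sq_mul (h : MvPolynomial (Fin n) ℝ) {p : MvPolynomial (Fin n) ℝ} (hp : memQM A p) :
    memQM A (h ^ 2 * p) := by
  obtain ⟨k, r, q, v, rfl⟩ := hp
  have hvLv (w : Fin m → MvPolynomial (Fin n) ℝ) : h ^ 2 * vLv A w = vLv A (h • w) := by
    simp only [vLv_eq_dotProduct, mulVec_smul, smul_dotProduct, dotProduct_smul, smul_eq_mul]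
    ring
  exact ⟨k, r, fun i => h * q i, fun j => h • v j,
    by simp only [mul_add, Finset.mul_sum, mul_pow, hvLv]⟩

theorem memQM.sumSq_mul {s p : MvPolynomial (Fin n) ℝ} (hs : IsSumSq s) (hp : memQM A p) :
    memQM A (s * p) := by
  induction hs with
  | zero => exact ⟨0, 0, Fin.elim0, Fin.elim0, by simp⟩
  | sq_add h hs ih =>
    rw [add_mul, ← sq]
    exact (hp.sq_mul _).add ih

/-- The quadratic module `M_L` of the pencil `L`. -/
def pencilModule (A : Fin (n + 1) → Matrix (Fin m) (Fin m) ℝ) :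
    SumSqSubmodule (MvPolynomial (Fin n) ℝ) where
  carrier := {p | memQM A p}
  zero_mem' := ⟨0, 0, Fin.elim0, Fin.elim0, by simp⟩
  add_mem' := memQM.add
  smul_mem' s _ hp := hp.sumSq_mul (Subsemiring.mem_sumSq.1 s.2)

theorem one_mem_pencilModule : 1 ∈ pencilModule A :=
  ⟨1, 0, fun _ => 1, Fin.elim0, by simp⟩

theorem vLv_mem_pencilModule (v : Fin m → MvPolynomial (Fin n) ℝ) : vLv A v ∈ pencilModule A :=
  ⟨0, 1, Fin.elim0, fun _ => v, by simp⟩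

theorem affinePoly_pencilForm_mem_pencilModule (u : Fin m → ℝ) :
    affinePoly n (pencilForm A u u) ∈ pencilModule A := by
  rw [affinePoly_pencilForm, ← vLv_eq_dotProduct]
  exact vLv_mem_pencilModule _

section Symmetric

variable (hsymm : ∀ i, (A i).IsSymm)

include hsymm

theorem pencilForm_comm (u v : Fin m → ℝ) : pencilForm A u v = pencilForm A v u := by
  ext i
  rw [pencilForm_apply, pencilForm_apply, dotProduct_mulVec, ← mulVec_transpose, (hsymm i).eq,
    dotProduct_comm]

theorem vLv_smul_add (p : MvPolynomial (Fin n) ℝ) (u v : Fin m → ℝ) :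
    vLv A (p • (fun a => C (u a)) + fun a => C (v a)) =
      p ^ 2 * affinePoly n (pencilForm A u u) + 2 * p * affinePoly n (pencilForm A u v) +
        affinePoly n (pencilForm A v v) := by
  rw [vLv_eq_dotProduct, mulVec_add, mulVec_smul]
  simp only [add_dotProduct, dotProduct_add, smul_dotProduct, dotProduct_smul, smul_eq_mul,
    ← affinePoly_pencilForm]
  rw [pencilForm_comm hsymm v u]
  ring

theorem mem_specSet_iff {x : Fin n → ℝ} :
    x ∈ specSet A ↔ ∀ u, 0 ≤ eval x (affinePoly n (pencilForm A u u)) := by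
  have hH : (pencilEval A x).IsHermitian := by
    simp only [pencilEval, IsHermitian, conjTranspose_eq_transpose_of_trivial, transpose_add,
      transpose_sum, transpose_smul, (hsymm _).eq]
  simp only [specSet, Set.mem_ofPred_eq, posSemidef_iff_dotProduct_mulVec, hH, true_and,
    eval_affinePoly_pencilForm, star_trivial]

theorem affinePoly_pencilForm_mem_supportIdeal {Q : SumSqSubmodule (MvPolynomial (Fin n) ℝ)}
    (hQ : IsCoatom Q) (hAQ : pencilModule A ≤ Q) {u : Fin m → ℝ}
    (hu : -affinePoly n (pencilForm A u u) ∈ Q) (v : Fin m → ℝ) :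
    affinePoly n (pencilForm A u v) ∈ Q.supportIdeal := by
  refine mem_supportIdeal_of_forall_add_mul_mem (hAQ one_mem_pencilModule) hQ
    (b := affinePoly n (pencilForm A v v)) fun p => ?_
  have hvLv := hAQ (vLv_mem_pencilModule ((⅟2 * p) • (fun a => C (u a)) + fun a => C (v a)))
  rw [vLv_smul_add hsymm] at hvLv
  convert Q.add_mem hvLv (sq_mul_mem (⅟2 * p) hu) using 1
  linear_combination (-p * affinePoly n (pencilForm A u v)) *
    invOf_mul_self (2 : MvPolynomial (Fin n) ℝ)

theorem specSet_nonempty_of_pencilModule_ne_top (hA : pencilModule A ≠ ⊤) :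
    (specSet A).Nonempty := by
  obtain ⟨Q, hQ, hAQ⟩ := exists_isCoatom_le hA
  have h1 := hAQ one_mem_pencilModule
  let P : PointedCone ℝ (Fin (n + 1) → ℝ) := Q.toPointedCone.comap (affinePoly n)
  have hP {d : Fin (n + 1) → ℝ} : d ∈ P ↔ affinePoly n d ∈ Q := Iff.rfl
  obtain ⟨ψ, hψ0, hψ⟩ : ∃ ψ : StrongDual ℝ (Fin (n + 1) → ℝ), 0 < ψ (Pi.single 0 1) ∧
      ∀ u, 0 ≤ ψ (pencilForm A u u) := by
    refine exists_dual_pos_of_bilin (P := P) ?_ ?_ (pencilForm_comm hsymm)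
      (fun u => hAQ (affinePoly_pencilForm_mem_pencilModule u)) fun u hu v => ?_
    · rwa [hP, affinePoly_single_zero, C_1]
    · rw [hP, map_neg, affinePoly_single_zero, C_1]
      exact neg_one_notMem_of_isCoatom h1 hQ
    · rw [hP, map_neg] at hu
      rw [PointedCone.mem_lineal, hP, hP, map_neg]
      exact affinePoly_pencilForm_mem_supportIdeal hsymm hQ hAQ hu v
  refine ⟨fun i => ψ (Pi.single i.succ 1) / ψ (Pi.single 0 1),
    (mem_specSet_iff hsymm).2 fun u => ?_⟩
  exact (div_nonneg (hψ u) hψ0.le).trans_eq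
    (eval_div_affinePoly (ψ := ψ.toLinearMap) hψ0.ne' _).symm

theorem linearMap_eq_zero_of_isBounded_specSet (hbdd : Bornology.IsBounded (specSet A))
    (hne : (specSet A).Nonempty) {ψ : (Fin (n + 1) → ℝ) →ₗ[ℝ] ℝ} (hψ0 : ψ (Pi.single 0 1) = 0)
    (hψ : ∀ u, 0 ≤ ψ (pencilForm A u u)) : ψ = 0 := by
  obtain ⟨x, hx⟩ := hne
  have hy : (fun i : Fin n => ψ (Pi.single i.succ 1)) = 0 := by
    refine eq_zero_of_isBounded_of_ray_subset hbdd (x := x) fun t ht =>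
      (mem_specSet_iff hsymm).2 fun u => ?_
    rw [eval_add_smul_affinePoly hψ0]
    exact add_nonneg ((mem_specSet_iff hsymm).1 hx u) (mul_nonneg ht (hψ u))
  refine LinearMap.ext fun d => ?_
  rw [linearMap_apply_eq_add_sum, hψ0]
  simp [congrFun hy]

theorem exists_algebraMap_sub_affinePoly_mem (hbdd : Bornology.IsBounded (specSet A))
    (hne : (specSet A).Nonempty) (d : Fin (n + 1) → ℝ) :
    ∃ N : ℝ, algebraMap ℝ _ N - affinePoly n d ∈ pencilModule A := by
  let W : Submodule ℝ (Fin (n + 1) → ℝ) := Submodule.span ℝ {Pi.single 0 1}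
  let P : PointedCone ℝ (Fin (n + 1) → ℝ) :=
    (pencilModule A).toPointedCone.comap (affinePoly n) ⊔ PointedCone.ofSubmodule W
  have hP : P = ⊤ := by
    refine pointedCone_eq_top_of_forall_dual_eq_zero fun ψ hψ => ?_
    have hW {w : Fin (n + 1) → ℝ} (hw : w ∈ W) : 0 ≤ ψ w := hψ w (Submodule.mem_sup_right hw)
    have he : Pi.single 0 1 ∈ W := Submodule.mem_span_singleton_self _
    refine ContinuousLinearMap.coe_injective
      (linearMap_eq_zero_of_isBounded_specSet hsymm hbdd hne ?_ fun u => ?_)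
    · exact le_antisymm (by simpa using hW (neg_mem he)) (hW he)
    · exact hψ _ (Submodule.mem_sup_left (affinePoly_pencilForm_mem_pencilModule u))
  obtain ⟨p, hp, w, hw, hpw⟩ := Submodule.mem_sup.1 (hP.ge (Submodule.mem_top : -d ∈ ⊤))
  obtain ⟨c, rfl⟩ := Submodule.mem_span_singleton.1 hw
  refine ⟨-c, ?_⟩
  have hp' : algebraMap ℝ _ (-c) - affinePoly n d = affinePoly n p := by
    rw [eq_sub_of_add_eq hpw]
    simp [affinePoly_single_zero, algebraMap_eq, smul_eq_C_mul, sub_eq_add_neg, add_comm]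
  exact hp' ▸ hp

theorem isArchimedean_pencilModule (hbdd : Bornology.IsBounded (specSet A)) :
    (pencilModule A).IsArchimedean := by
  by_cases hA : pencilModule A = ⊤
  · exact ⟨one_mem_pencilModule, fun a => ⟨0, hA ▸ Submodule.mem_top⟩⟩
  have hne := specSet_nonempty_of_pencilModule_ne_top hsymm hA
  refine isArchimedean_of_adjoin_eq_top one_mem_pencilModule adjoin_range_X ?_
  rintro _ ⟨i, rfl⟩
  rw [← affinePoly_single_succ i, ← map_neg]
  exact ⟨exists_algebraMap_sub_affinePoly_mem hsymm hbdd hne _,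
    exists_algebraMap_sub_affinePoly_mem hsymm hbdd hne _⟩

theorem comp_X_mem_specSet_of_nonneg {φ : MvPolynomial (Fin n) ℝ →ₐ[ℝ] ℝ}
    (hφ : ∀ p ∈ pencilModule A, 0 ≤ φ p) : φ ∘ X ∈ specSet A :=
  (mem_specSet_iff hsymm).2 fun u => by
    rw [← algHom_apply_eq_eval_comp_X]
    exact hφ _ (affinePoly_pencilForm_mem_pencilModule u)

end Symmetric

end Pencil

/-- **Putinar-type Positivstellensatz for bounded spectrahedra.** If `L` is a linear pencil
whose spectrahedron `S_L` is bounded and `f` is a polynomial with `f > 0` on `S_L`,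
then `f ∈ M_L`. -/
theorem mem_quadraticModule_of_pos_on_bounded_spectrahedron
    (n m : ℕ) (A : Fin (n+1) → Matrix (Fin m) (Fin m) ℝ)
    (hsymm : ∀ i, (A i).IsSymm)
    (hbdd : Bornology.IsBounded (specSet A))
    (f : MvPolynomial (Fin n) ℝ)
    (hf : ∀ x ∈ specSet A, 0 < MvPolynomial.eval x f) :
    memQM A f := by
  refine (isArchimedean_pencilModule hsymm hbdd).mem_of_forall_algHom_pos fun φ hφ => ?_
  rw [algHom_apply_eq_eval_comp_X]
  exact hf _ (comp_X_mem_specSet_of_nonneg hsymm hφ)
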